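/- arXiv:1604.03345 — 2 statements merged into one kernel-verified Lean document; each statement's English description precedes it below -/
import Mathlib

section
/- With the explicit functions of θ > 0 defined in the context, σ₁²(θ) admits the asymptotic expansion σ₁²(θ) = 6/θ + 18/θ² + 18/θ³ − 54/θ⁴ + o(1/θ⁴) as θ → +∞; equivalently, θ⁴·(σ₁²(θ) − 6/θ − 18/θ² − 18/θ³) → −54 as θ → +∞. -/
open Real Filter

/-- `Var(G₁)` as an explicit function of `θ`. -/
noncomputable def V1 (θ : ℝ) : ℝ := (1 - Real.exp (-2 * θ)) / (2 * θ)

/-- `Cov(G₁,G₃)` as an explicit function of `θ`. -/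
noncomputable def C13 (θ : ℝ) : ℝ :=
  (1 / (2 * θ) + 1 / θ ^ 2 + 1 / θ ^ 3) * (1 - Real.exp (-2 * θ)) - 2 / θ ^ 2

noncomputable def alphaC (θ : ℝ) : ℝ := Real.sqrt (V1 θ)

noncomputable def betaC (θ : ℝ) : ℝ := C13 θ / alphaC θ

noncomputable def sigma1sq (θ : ℝ) : ℝ :=
  (2 * (-(θ ^ 2 / 3 + θ / 2) * alphaC θ ^ 2 + θ ^ 2 * alphaC θ * betaC θ / 2 + 1 / 2))⁻¹

/-!
Write `σ₁² = (6 / θ) / p` with `p = 1 - 3 / θ + 6 / θ ^ 2` up to an exponentially small term.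
The square roots cancel, because `α` enters the variance only through `α ^ 2 = V₁` and
`α * β = C₁₃`. Since `(1 + 3x + 3x²) (1 - 3x + 6x²) = 1 + 9x³ + 18x⁴`, the polynomial
`1 + 3x + 3x²` at `x = 1 / θ` inverts `p` with residual `-9 / θ ^ 3` to leading order,
and multiplying by `6 / θ` yields the coefficients `6, 18, 18, -54`.
-/

theorem tendsto_mul_inv_sub {ι K : Type*} [Field K] [TopologicalSpace K] [T1Space K]
    [ContinuousMul K] [ContinuousInv₀ K] {l : Filter ι} {w p q : ι → K} {c d : K}
    (hp : Tendsto p l (nhds d)) (hd : d ≠ 0)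
    (hres : Tendsto (fun i => w i * (1 - q i * p i)) l (nhds c)) :
    Tendsto (fun i => w i * ((p i)⁻¹ - q i)) l (nhds (c / d)) := by
  refine (hres.div hp hd).congr' ?_
  filter_upwards [hp.eventually_ne hd] with i hi
  simp only [Pi.div_apply]
  field_simp

theorem tendsto_add_div_add_div_sq_atTop {K : Type*} [Field K] [LinearOrder K]
    [IsStrictOrderedRing K] [TopologicalSpace K] [OrderTopology K] (a b c : K) :
    Tendsto (fun x => c + a / x + b / x ^ 2) atTop (nhds c) := by
  have ha : Tendsto (fun x => a / x) atTop (nhds 0) := tendsto_const_nhds.div_atTop tendsto_id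
  have hb : Tendsto (fun x => b / x ^ 2) atTop (nhds 0) :=
    tendsto_const_nhds.div_atTop (tendsto_pow_atTop two_ne_zero)
  simpa only [add_zero] using (ha.const_add c).add hb

theorem tendsto_pow_mul_exp_neg_mul_atTop (n : ℕ) {b : ℝ} (hb : 0 < b) :
    Tendsto (fun x => x ^ n * exp (-b * x)) atTop (nhds 0) := by
  simpa only [rpow_natCast] using tendsto_rpow_mul_exp_neg_mul_atTop_nhds_zero n b hb

theorem V1_pos {θ : ℝ} (hθ : θ ≠ 0) : 0 < V1 θ := by
  rcases hθ.lt_or_gt with hneg | hpos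
  · have hexp : 1 < exp (-2 * θ) := one_lt_exp_iff.2 (by linarith)
    exact div_pos_of_neg_of_neg (by linarith) (by linarith)
  · have hexp : exp (-2 * θ) < 1 := exp_lt_one_iff.2 (by linarith)
    exact div_pos (by linarith) (by linarith)

theorem alphaC_sq {θ : ℝ} (hθ : θ ≠ 0) : alphaC θ ^ 2 = V1 θ :=
  sq_sqrt (V1_pos hθ).le

theorem alphaC_mul_betaC {θ : ℝ} (hθ : θ ≠ 0) : alphaC θ * betaC θ = C13 θ :=
  mul_div_cancel₀ _ (sqrt_pos.2 (V1_pos hθ)).ne'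

/-- The normalized precision `6 / (θ σ₁²)` in closed form: unlike `1 / σ₁²` itself, it has a finite
nonzero limit as `θ → ∞`. -/
noncomputable def normalizedPrecision (θ : ℝ) : ℝ :=
  1 - 3 / θ + 6 / θ ^ 2 - exp (-2 * θ) * (1 + 3 / θ + 6 / θ ^ 2)

theorem sigma1sq_eq {θ : ℝ} (hθ : θ ≠ 0) :
    sigma1sq θ = 6 / θ * (normalizedPrecision θ)⁻¹ := by
  have hprec : 2 * (-(θ ^ 2 / 3 + θ / 2) * V1 θ + θ ^ 2 * C13 θ / 2 + 1 / 2) =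
      θ / 6 * normalizedPrecision θ := by
    rw [V1, C13, normalizedPrecision]
    field_simp
    ring
  rw [sigma1sq, mul_assoc (θ ^ 2), alphaC_sq hθ, alphaC_mul_betaC hθ, hprec, mul_inv, inv_div]

theorem tendsto_normalizedPrecision : Tendsto normalizedPrecision atTop (nhds 1) := by
  have hexp : Tendsto (fun θ : ℝ => exp (-2 * θ)) atTop (nhds 0) := by
    simpa only [pow_zero, one_mul] using tendsto_pow_mul_exp_neg_mul_atTop 0 two_pos
  have hlim := (tendsto_add_div_add_div_sq_atTop (-3) 6 1).sub
    (hexp.mul (tendsto_add_div_add_div_sq_atTop 3 6 1))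
  rw [zero_mul, sub_zero] at hlim
  exact hlim.congr fun θ => by rw [normalizedPrecision, neg_div, ← sub_eq_add_neg]

theorem pow_three_mul_residual_normalizedPrecision {θ : ℝ} (hθ : θ ≠ 0) :
    θ ^ 3 * (1 - (1 + 3 / θ + 3 / θ ^ 2) * normalizedPrecision θ) =
      -9 + -18 / θ + θ ^ 3 * exp (-2 * θ) *
        ((1 + 3 / θ + 3 / θ ^ 2) * (1 + 3 / θ + 6 / θ ^ 2)) := by
  rw [normalizedPrecision]
  field_simp
  ring

theorem tendsto_pow_three_mul_residual_normalizedPrecision :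
    Tendsto (fun θ => θ ^ 3 * (1 - (1 + 3 / θ + 3 / θ ^ 2) * normalizedPrecision θ))
      atTop (nhds (-9)) := by
  have hpoly : Tendsto (fun θ : ℝ => -9 + -18 / θ) atTop (nhds (-9)) := by
    simpa only [zero_div, add_zero] using tendsto_add_div_add_div_sq_atTop (-18 : ℝ) 0 (-9)
  have hexp : Tendsto (fun θ : ℝ => θ ^ 3 * exp (-2 * θ) *
      ((1 + 3 / θ + 3 / θ ^ 2) * (1 + 3 / θ + 6 / θ ^ 2))) atTop (nhds 0) := by
    simpa only [zero_mul] using (tendsto_pow_mul_exp_neg_mul_atTop 3 two_pos).mul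
      ((tendsto_add_div_add_div_sq_atTop 3 3 1).mul (tendsto_add_div_add_div_sq_atTop 3 6 1))
  rw [← add_zero (-9 : ℝ)]
  refine (hpoly.add hexp).congr' ?_
  filter_upwards [eventually_ne_atTop 0] with θ hθ
  exact (pow_three_mul_residual_normalizedPrecision hθ).symm

theorem sigma1sq_asymptotic
    (hwd : ∀ᶠ θ : ℝ in atTop,
      0 < -(θ ^ 2 / 3 + θ / 2) * alphaC θ ^ 2 + θ ^ 2 * alphaC θ * betaC θ / 2 + 1 / 2) :
    Tendsto (fun θ : ℝ => θ ^ 4 * (sigma1sq θ - 6 / θ - 18 / θ ^ 2 - 18 / θ ^ 3))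
      atTop (nhds (-54)) := by
  have hinv : Tendsto (fun θ => θ ^ 3 * ((normalizedPrecision θ)⁻¹ - (1 + 3 / θ + 3 / θ ^ 2)))
      atTop (nhds (-9 / 1)) :=
    tendsto_mul_inv_sub tendsto_normalizedPrecision one_ne_zero
      tendsto_pow_three_mul_residual_normalizedPrecision
  have hlim := hinv.const_mul 6
  rw [show (6 : ℝ) * (-9 / 1) = -54 by norm_num] at hlim
  refine hlim.congr' ?_
  filter_upwards [eventually_ne_atTop 0] with θ hθ
  rw [sigma1sq_eq hθ]
  field_simp
  ring
end

section
/- Let μ and μ′ be probability measures on a measurable space E and let Ψ : E → [0,∞) be a bounded measurable function with ∫Ψ dμ > 0 and ∫Ψ dμ′ > 0. Then ‖Ψ•μ − Ψ•μ′‖ ≤ 2·min(1, (‖Ψ‖_∞ / ∫Ψ dμ) · ‖μ − μ′‖), where ‖Ψ‖_∞ = sup_{x∈E} Ψ(x). -/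
/-! For a measurable set `s` put `a = ∫_s Ψ dμ`, `b = ∫_{sᶜ} Ψ dμ`, and `a'`, `b'` likewise for
`μ'`. The masses of `s` under the two reweighted measures are `a / (a + b)` and `a' / (a' + b')`;
with the weight `p = a' / (a' + b')`,
`(a + b) * (a / (a + b) - a' / (a' + b')) = (1 - p) * (a - a') - p * (b - b')`.
By the layer-cake formula `|a - a'|` and `|b - b'|` are both at most `‖Ψ‖_∞ * ‖μ - μ'‖`, hence so is
this combination. Treating `s` and `sᶜ` together avoids the factor `2` that comes from bounding the
errors in numerator and denominator separately. -/

open MeasureTheory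

/-- Total variation distance `sup_A |μ(A) − ν(A)|` between two measures. -/
noncomputable def tvDist {E : Type*} [MeasurableSpace E] (μ ν : Measure E) : ℝ :=
  ⨆ s : { s : Set E // MeasurableSet s }, |(μ s).toReal - (ν s).toReal|

/-- The probability measure `Ψ•μ (dv) = Ψ(v) μ(dv) / ∫ Ψ dμ`. -/
noncomputable def bullet {E : Type*} [MeasurableSpace E] (Ψ : E → ℝ) (μ : Measure E) :
    Measure E :=
  (ENNReal.ofReal (∫ v, Ψ v ∂μ))⁻¹ • μ.withDensity fun v => ENNReal.ofReal (Ψ v)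

lemma abs_div_add_sub_div_add_le {𝕜 : Type*} [Field 𝕜] [LinearOrder 𝕜] [IsStrictOrderedRing 𝕜]
    {a b a' b' c : 𝕜} (hab : 0 < a + b) (ha' : 0 ≤ a') (hb' : 0 ≤ b') (hab' : 0 < a' + b')
    (ha : |a - a'| ≤ c) (hb : |b - b'| ≤ c) :
    |a / (a + b) - a' / (a' + b')| ≤ c / (a + b) := by
  have hdiff : a / (a + b) - a' / (a' + b') =
      (b' / (a' + b') * (a - a') - a' / (a' + b') * (b - b')) / (a + b) := by
    field_simp
    ring
  rw [hdiff, abs_div, abs_of_pos hab]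
  gcongr
  calc |b' / (a' + b') * (a - a') - a' / (a' + b') * (b - b')|
      ≤ |b' / (a' + b') * (a - a')| + |a' / (a' + b') * (b - b')| := abs_sub _ _
    _ = b' / (a' + b') * |a - a'| + a' / (a' + b') * |b - b'| := by
      rw [abs_mul, abs_mul, abs_of_nonneg (div_nonneg hb' hab'.le),
        abs_of_nonneg (div_nonneg ha' hab'.le)]
    _ ≤ b' / (a' + b') * c + a' / (a' + b') * c := by gcongr
    _ = c := by
      field_simp
      ring

section TotalVariation

variable {E : Type*} [MeasurableSpace E] {μ ν : Measure E}

lemma tvDist_nonneg : 0 ≤ tvDist μ ν :=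
  Real.iSup_nonneg fun _ => abs_nonneg _

lemma tvDist_le {c : ℝ} (h : ∀ s, MeasurableSet s → |μ.real s - ν.real s| ≤ c) :
    tvDist μ ν ≤ c :=
  ciSup_le fun s => h s s.2

lemma tvDist_le_one [IsProbabilityMeasure μ] [IsProbabilityMeasure ν] : tvDist μ ν ≤ 1 :=
  tvDist_le fun _ _ => abs_sub_le_of_nonneg_of_le
    measureReal_nonneg measureReal_le_one measureReal_nonneg measureReal_le_one

variable [IsFiniteMeasure μ] [IsFiniteMeasure ν]

lemma abs_measureReal_sub_le_tvDist {s : Set E} (hs : MeasurableSet s) :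
    |μ.real s - ν.real s| ≤ tvDist μ ν := by
  have hbdd : BddAbove (Set.range fun t : {t : Set E // MeasurableSet t} =>
      |μ.real t - ν.real t|) := by
    refine ⟨max (μ.real Set.univ) (ν.real Set.univ), Set.forall_mem_range.2 fun t => ?_⟩
    exact abs_sub_le_of_nonneg_of_le
      measureReal_nonneg ((measureReal_mono (Set.subset_univ _)).trans (le_max_left _ _))
      measureReal_nonneg ((measureReal_mono (Set.subset_univ _)).trans (le_max_right _ _))
  exact le_ciSup hbdd ⟨s, hs⟩

lemma abs_integral_sub_integral_le_mul_tvDist {f : E → ℝ} {M : ℝ} (hf : Measurable f)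
    (hf0 : ∀ x, 0 ≤ f x) (hfM : ∀ x, f x ≤ M) :
    |∫ x, f x ∂μ - ∫ x, f x ∂ν| ≤ M * tvDist μ ν := by
  rcases isEmpty_or_nonempty E with hE | ⟨⟨x₀⟩⟩
  · simp [Measure.eq_zero_of_isEmpty, tvDist]
  have hM : 0 ≤ M := (hf0 x₀).trans (hfM x₀)
  have layer_cake (ρ : Measure E) [IsFiniteMeasure ρ] :
      ∫ x, f x ∂ρ = ∫ t in Set.Ioc 0 M, ρ.real {x | t ≤ f x} :=
    (Integrable.of_mem_Icc 0 M hf.aemeasurable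
      (.of_forall fun x => ⟨hf0 x, hfM x⟩)).integral_eq_integral_Ioc_meas_le
      (.of_forall hf0) (.of_forall hfM)
  have integrableOn_levels (ρ : Measure E) [IsFiniteMeasure ρ] :
      IntegrableOn (fun t => ρ.real {x | t ≤ f x}) (Set.Ioc 0 M) := by
    have hanti : Antitone fun t => ρ.real {x | t ≤ f x} :=
      fun _ _ hst => measureReal_mono fun _ => hst.trans
    exact (hanti.antitoneOn _).integrableOn_isCompact isCompact_Icc |>.mono_set
      Set.Ioc_subset_Icc_self
  calc |∫ x, f x ∂μ - ∫ x, f x ∂ν|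
      = ‖∫ t in Set.Ioc 0 M, (μ.real {x | t ≤ f x} - ν.real {x | t ≤ f x})‖ := by
        rw [layer_cake μ, layer_cake ν,
          integral_sub (integrableOn_levels μ) (integrableOn_levels ν), Real.norm_eq_abs]
    _ ≤ tvDist μ ν * volume.real (Set.Ioc 0 M) :=
        norm_setIntegral_le_of_norm_le_const measure_Ioc_lt_top fun _ _ =>
          abs_measureReal_sub_le_tvDist (measurableSet_le measurable_const hf)
    _ = M * tvDist μ ν := by rw [Real.volume_real_Ioc_of_le hM, sub_zero, mul_comm]

lemma abs_setIntegral_sub_setIntegral_le_mul_tvDist {f : E → ℝ} {M : ℝ} (hf : Measurable f)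
    (hf0 : ∀ x, 0 ≤ f x) (hfM : ∀ x, f x ≤ M) {s : Set E} (hs : MeasurableSet s) :
    |∫ x in s, f x ∂μ - ∫ x in s, f x ∂ν| ≤ M * tvDist μ ν := by
  rw [← integral_indicator hs, ← integral_indicator hs]
  exact abs_integral_sub_integral_le_mul_tvDist (hf.indicator hs)
    (Set.indicator_nonneg fun x _ => hf0 x)
    fun x => (Set.indicator_le_self' (fun y _ => hf0 y) x).trans (hfM x)

end TotalVariation

section Bullet

variable {E : Type*} [MeasurableSpace E] {μ μ' : Measure E} {Ψ : E → ℝ}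

lemma bullet_real_apply (hΨ : Integrable Ψ μ) (hΨ0 : 0 ≤ᵐ[μ] Ψ) {s : Set E}
    (hs : MeasurableSet s) :
    (bullet Ψ μ).real s = (∫ x in s, Ψ x ∂μ) / ∫ x, Ψ x ∂μ := by
  rw [bullet, measureReal_ennreal_smul_apply, measureReal_def, withDensity_apply _ hs,
    ← ofReal_integral_eq_lintegral_ofReal hΨ.integrableOn (ae_restrict_of_ae hΨ0),
    ENNReal.toReal_inv, ENNReal.toReal_ofReal (integral_nonneg_of_ae hΨ0),
    ENNReal.toReal_ofReal (integral_nonneg_of_ae (ae_restrict_of_ae hΨ0)), inv_mul_eq_div]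

lemma isProbabilityMeasure_bullet (hΨ0 : 0 ≤ᵐ[μ] Ψ) (hpos : 0 < ∫ x, Ψ x ∂μ) :
    IsProbabilityMeasure (bullet Ψ μ) := by
  have hΨ : Integrable Ψ μ := .of_integral_ne_zero hpos.ne'
  refine ⟨(ENNReal.toReal_eq_one_iff _).1 ?_⟩
  rw [← measureReal_def, bullet_real_apply hΨ hΨ0 .univ, setIntegral_univ, div_self hpos.ne']

lemma tvDist_bullet_le_div_mul [IsFiniteMeasure μ] [IsFiniteMeasure μ'] {M : ℝ}
    (hΨ : Measurable Ψ) (hΨ0 : ∀ x, 0 ≤ Ψ x) (hΨM : ∀ x, Ψ x ≤ M)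
    (hpos : 0 < ∫ x, Ψ x ∂μ) (hpos' : 0 < ∫ x, Ψ x ∂μ') :
    tvDist (bullet Ψ μ) (bullet Ψ μ') ≤ M / (∫ x, Ψ x ∂μ) * tvDist μ μ' := by
  have hint : Integrable Ψ μ := .of_integral_ne_zero hpos.ne'
  have hint' : Integrable Ψ μ' := .of_integral_ne_zero hpos'.ne'
  refine tvDist_le fun s hs => ?_
  rw [bullet_real_apply hint (.of_forall hΨ0) hs, bullet_real_apply hint' (.of_forall hΨ0) hs,
    div_mul_eq_mul_div]
  rw [← integral_add_compl hs hint] at hpos ⊢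
  rw [← integral_add_compl hs hint'] at hpos' ⊢
  exact abs_div_add_sub_div_add_le hpos (integral_nonneg hΨ0) (integral_nonneg hΨ0) hpos'
    (abs_setIntegral_sub_setIntegral_le_mul_tvDist hΨ hΨ0 hΨM hs)
    (abs_setIntegral_sub_setIntegral_le_mul_tvDist hΨ hΨ0 hΨM hs.compl)

end Bullet

theorem bullet_tv_bound_general {E : Type*} [MeasurableSpace E] (μ μ' : Measure E)
    [IsFiniteMeasure μ] [IsFiniteMeasure μ'] (Ψ : E → ℝ) (hmeas : Measurable Ψ)
    (hnn : ∀ x, 0 ≤ Ψ x) (hbdd : BddAbove (Set.range Ψ))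
    (hpos : 0 < ∫ x, Ψ x ∂μ) (hpos' : 0 < ∫ x, Ψ x ∂μ') :
    tvDist (bullet Ψ μ) (bullet Ψ μ') ≤ min 1 ((⨆ x, Ψ x) / (∫ x, Ψ x ∂μ) * tvDist μ μ') := by
  have := isProbabilityMeasure_bullet (.of_forall hnn) hpos
  have := isProbabilityMeasure_bullet (.of_forall hnn) hpos'
  exact le_min tvDist_le_one (tvDist_bullet_le_div_mul hmeas hnn (le_ciSup hbdd) hpos hpos')

theorem bullet_tv_bound
    {E : Type*} [MeasurableSpace E] (μ μ' : Measure E)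
    (hμ : IsProbabilityMeasure μ) (hμ' : IsProbabilityMeasure μ')
    (Ψ : E → ℝ) (hmeas : Measurable Ψ) (hnn : ∀ x, 0 ≤ Ψ x)
    (hbdd : ∃ C : ℝ, ∀ x, Ψ x ≤ C)
    (h1 : 0 < ∫ x, Ψ x ∂μ) (h2 : 0 < ∫ x, Ψ x ∂μ') :
    tvDist (bullet Ψ μ) (bullet Ψ μ') ≤
      2 * min 1 ((⨆ x, Ψ x) / (∫ x, Ψ x ∂μ) * tvDist μ μ') := by
  have hle := bullet_tv_bound_general μ μ' Ψ hmeas hnn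
    (hbdd.imp fun _ => Set.forall_mem_range.2) h1 h2
  exact hle.trans (le_mul_of_one_le_left (tvDist_nonneg.trans hle) one_le_two)
end
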